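/- Let V be an n-dimensional vector space over the finite field 𝔽_q, let t ≥ 1 and n ≥ 2t, and let F be a cover-free family of (2t-1)-dimensional subspaces of V. Then |F| = [n choose t]_q / [2t-1 choose t]_q holds if and only if F is a q-Steiner system S_q(t, 2t-1, n) on V. -/

import Mathlib

/-- A family of subspaces is cover-free if there are no three distinct members
`F₀, F₁, F₂` with `F₀ ≤ (F₀ ⊓ F₁) ⊔ (F₀ ⊓ F₂)`. -/
def IsCoverFree {K V : Type*} [Field K] [AddCommGroup V] [Module K V]
    (F : Set (Submodule K V)) : Prop :=
  ¬ ∃ F₀ F₁ F₂ : Submodule K V, F₀ ∈ F ∧ F₁ ∈ F ∧ F₂ ∈ F ∧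
    F₀ ≠ F₁ ∧ F₀ ≠ F₂ ∧ F₁ ≠ F₂ ∧ F₀ ≤ (F₀ ⊓ F₁) ⊔ (F₀ ⊓ F₂)

/-- The Gaussian binomial coefficient `[m choose k]_q` as a rational number. -/
def GaussQ (q m k : ℕ) : ℚ :=
  ∏ i ∈ Finset.range k, ((q : ℚ) ^ (m - i) - 1) / ((q : ℚ) ^ (k - i) - 1)

/-!
Call a subspace of a member `A` of a family `F` *own* if it lies in no other member of `F`. If `F`
is cover-free and `A = T ⊔ S`, then `T` or `S` is own. For `dim A = 2 * t - 1`, every complement in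
`A` of a `t`-space of `A` that is not own is therefore an own `(t - 1)`-space, and double counting
complementary pairs shows that `A` has at most as many non-own `t`-spaces as own `(t - 1)`-spaces.
Each own `(t - 1)`-space of `A` extends to at least `q ^ t` spaces of dimension `t` not inside `A`,
all of them contained in no member of `F`, whereas a `t`-space has fewer than `q ^ t` hyperplanes.
So the `t`-spaces contained in no member outnumber the own `(t - 1)`-spaces, strictly unless there
are none of either, and `|F| * [2t-1 choose t]_q` is at most the number of all `t`-spaces.
In case of equality every `t`-space lies in some member and is own in it.
-/

open Module Finset

section GaussianBinomial

lemma gaussQ_eq_prod_div {q m k : ℕ} (hq : q ≠ 0) (hkm : k ≤ m) :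
    GaussQ q m k = ∏ i ∈ range k, ((q : ℚ) ^ m - (q : ℚ) ^ i) / ((q : ℚ) ^ k - (q : ℚ) ^ i) := by
  have hq' : (q : ℚ) ≠ 0 := Nat.cast_ne_zero.2 hq
  have factor {a i : ℕ} (hia : i ≤ a) :
      (q : ℚ) ^ a - (q : ℚ) ^ i = (q : ℚ) ^ i * ((q : ℚ) ^ (a - i) - 1) := by
    rw [mul_sub_one, ← pow_add, Nat.add_sub_cancel' hia]
  refine prod_congr rfl fun i hi => ?_
  have hik : i < k := mem_range.1 hi
  rw [factor hik.le, factor (hik.le.trans hkm), mul_div_mul_left _ _ (pow_ne_zero i hq')]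

lemma gaussQ_pos {q m k : ℕ} (hq : 1 < q) (hkm : k ≤ m) : 0 < GaussQ q m k := by
  have hq' : (1 : ℚ) < q := Nat.one_lt_cast.2 hq
  refine prod_pos fun i hi => ?_
  have hik : i < k := mem_range.1 hi
  exact div_pos (sub_pos.2 (one_lt_pow₀ hq' (by omega))) (sub_pos.2 (one_lt_pow₀ hq' (by omega)))

lemma gaussQ_succ_self {q : ℕ} (hq : 1 < q) (k : ℕ) :
    GaussQ q (k + 1) k = ((q : ℚ) ^ (k + 1) - 1) / (q - 1) := by
  have hq' : (1 : ℚ) < q := Nat.one_lt_cast.2 hq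
  have hden : ∏ i ∈ range k, ((q : ℚ) ^ (k - i) - 1) ≠ 0 := prod_ne_zero_iff.2 fun i hi =>
    (sub_pos.2 (one_lt_pow₀ hq' (Nat.sub_ne_zero_of_lt (mem_range.1 hi)))).ne'
  have telescope : (∏ i ∈ range k, ((q : ℚ) ^ (k + 1 - i) - 1)) * (q - 1) =
      ((q : ℚ) ^ (k + 1) - 1) * ∏ i ∈ range k, ((q : ℚ) ^ (k - i) - 1) := by
    have hsucc := prod_range_succ (fun i => (q : ℚ) ^ (k + 1 - i) - 1) k
    rw [prod_range_succ'] at hsucc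
    simpa [mul_comm] using hsucc.symm
  rw [GaussQ, prod_div_distrib, div_eq_div_iff hden (sub_pos.2 hq').ne', telescope]

end GaussianBinomial

section CountingSubspaces

variable {K V : Type*} [Field K] [AddCommGroup V] [Module K V] [Finite V]

/-- The family `[U choose k]` of all `k`-dimensional subspaces of `U`. -/
noncomputable def kSubspaces (U : Submodule K V) (k : ℕ) : Finset (Submodule K V) :=
  {T : Submodule K V | T ≤ U ∧ finrank K T = k}.toFinite.toFinset

@[simp]
lemma mem_kSubspaces {U T : Submodule K V} {k : ℕ} :
    T ∈ kSubspaces U k ↔ T ≤ U ∧ finrank K T = k := by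
  simp [kSubspaces]

/-- The linearly independent `k`-tuples of vectors of `U`. They are counted in order to count
`k`-dimensional subspaces. -/
noncomputable def indepTuples (U : Submodule K V) (k : ℕ) : Finset (Fin k → V) :=
  {s : Fin k → V | LinearIndependent K s ∧ ∀ i, s i ∈ U}.toFinite.toFinset

@[simp]
lemma mem_indepTuples {U : Submodule K V} {k : ℕ} {s : Fin k → V} :
    s ∈ indepTuples U k ↔ LinearIndependent K s ∧ ∀ i, s i ∈ U := by
  simp [indepTuples]

lemma span_range_eq_of_mem_indepTuples {T : Submodule K V} {k : ℕ} {s : Fin k → V}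
    (hs : s ∈ indepTuples T k) (hT : finrank K T = k) : Submodule.span K (Set.range s) = T := by
  obtain ⟨hli, hmem⟩ := mem_indepTuples.1 hs
  refine Submodule.eq_of_le_of_finrank_eq
    (Submodule.span_le.2 (Set.range_subset_iff.2 hmem)) ?_
  rw [finrank_span_eq_card hli, Fintype.card_fin, hT]

lemma card_indepTuples [Finite K] {U : Submodule K V} {k : ℕ} (hk : k ≤ finrank K U) :
    #(indepTuples U k) = ∏ i ∈ range k, (Nat.card K ^ finrank K U - Nat.card K ^ i) := by
  have := Fintype.ofFinite K
  let e : {s : Fin k → U // LinearIndependent K s} ≃ indepTuples U k :=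
    { toFun := fun s => ⟨fun i => s.1 i,
        mem_indepTuples.2 ⟨s.2.map' U.subtype U.ker_subtype, fun i => (s.1 i).2⟩⟩
      invFun := fun s => ⟨fun i => ⟨s.1 i, (mem_indepTuples.1 s.2).2 i⟩,
        (mem_indepTuples.1 s.2).1.of_comp U.subtype⟩
      left_inv := fun _ => rfl
      right_inv := fun _ => rfl }
  rw [prod_range, Nat.card_eq_fintype_card, ← card_linearIndependent hk, Nat.card_congr e,
    Nat.card_eq_finsetCard]

lemma card_indepTuples_eq_sum (U : Submodule K V) (k : ℕ) :
    #(indepTuples U k) = ∑ T ∈ kSubspaces U k, #(indepTuples T k) := by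
  classical
  rw [← card_biUnion]
  · congr 1
    ext s
    simp only [mem_biUnion]
    constructor
    · intro hs
      obtain ⟨hli, hmem⟩ := mem_indepTuples.1 hs
      refine ⟨Submodule.span K (Set.range s), mem_kSubspaces.2 ⟨?_, ?_⟩,
        mem_indepTuples.2 ⟨hli, fun i => Submodule.subset_span (Set.mem_range_self i)⟩⟩
      · exact Submodule.span_le.2 (Set.range_subset_iff.2 hmem)
      · rw [finrank_span_eq_card hli, Fintype.card_fin]
    · rintro ⟨T, hT, hs⟩
      obtain ⟨hli, hmem⟩ := mem_indepTuples.1 hs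
      exact mem_indepTuples.2 ⟨hli, fun i => (mem_kSubspaces.1 hT).1 (hmem i)⟩
  · intro T hT T' hT' hne
    refine disjoint_left.2 fun s hs hs' => hne ?_
    rw [← span_range_eq_of_mem_indepTuples hs (mem_kSubspaces.1 hT).2,
      span_range_eq_of_mem_indepTuples hs' (mem_kSubspaces.1 hT').2]

lemma card_kSubspaces [Finite K] {U : Submodule K V} {k : ℕ} (hk : k ≤ finrank K U) :
    (#(kSubspaces U k) : ℚ) = GaussQ (Nat.card K) (finrank K U) k := by
  have hq : (1 : ℚ) < Nat.card K := Nat.one_lt_cast.2 Finite.one_lt_card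
  have cast_prod {m : ℕ} (hkm : k ≤ m) :
      ((∏ i ∈ range k, (Nat.card K ^ m - Nat.card K ^ i) : ℕ) : ℚ) =
        ∏ i ∈ range k, ((Nat.card K : ℚ) ^ m - (Nat.card K : ℚ) ^ i) := by
    rw [Nat.cast_prod]
    refine prod_congr rfl fun i hi => ?_
    have him : i ≤ m := (mem_range.1 hi).le.trans hkm
    rw [Nat.cast_sub (Nat.pow_le_pow_right Nat.card_pos him), Nat.cast_pow, Nat.cast_pow]
  have count : #(kSubspaces U k) * ∏ i ∈ range k, (Nat.card K ^ k - Nat.card K ^ i) =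
      ∏ i ∈ range k, (Nat.card K ^ finrank K U - Nat.card K ^ i) := by
    rw [← card_indepTuples hk, card_indepTuples_eq_sum, ← smul_eq_mul]
    refine (sum_eq_card_nsmul fun T hT => ?_).symm
    have hTk : finrank K T = k := (mem_kSubspaces.1 hT).2
    rw [card_indepTuples hTk.ge, hTk]
  rw [gaussQ_eq_prod_div Nat.card_pos.ne' hk, prod_div_distrib, ← cast_prod hk, ← count,
    Nat.cast_mul, cast_prod le_rfl, mul_div_cancel_right₀]
  exact prod_ne_zero_iff.2 fun i hi =>
    (sub_pos.2 (pow_lt_pow_right₀ hq (mem_range.1 hi))).ne'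

lemma card_kSubspaces_lt_of_finrank_eq_succ [Finite K] {T : Submodule K V} {k : ℕ}
    (hT : finrank K T = k + 1) : #(kSubspaces T k) < Nat.card K ^ (k + 1) := by
  have hq : (2 : ℚ) ≤ Nat.card K := Nat.ofNat_le_cast.2 (Finite.one_lt_card (α := K))
  have hpow : (1 : ℚ) ≤ (Nat.card K : ℚ) ^ (k + 1) := one_le_pow₀ (by linarith)
  rw [← Nat.cast_lt (α := ℚ), Nat.cast_pow, card_kSubspaces (by omega), hT,
    gaussQ_succ_self Finite.one_lt_card]
  calc ((Nat.card K : ℚ) ^ (k + 1) - 1) / (Nat.card K - 1)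
      ≤ (Nat.card K : ℚ) ^ (k + 1) - 1 := div_le_self (by linarith) (by linarith)
    _ < (Nat.card K : ℚ) ^ (k + 1) := sub_one_lt _

end CountingSubspaces

section RelativeComplements

lemma natCard_isCompl {R E : Type*} [Ring R] [AddCommGroup E] [Module R E] {p r : Submodule R E}
    (h : IsCompl p r) : Nat.card {r' // IsCompl p r'} = Nat.card (r →ₗ[R] p) := by
  refine Nat.card_congr (p.isComplEquivProj.trans
    { toFun := fun f => f.1 ∘ₗ r.subtype
      invFun := fun g => ⟨LinearMap.ofIsCompl h LinearMap.id g,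
        fun x => LinearMap.ofIsCompl_apply_left h x⟩
      left_inv := fun f => Subtype.ext (LinearMap.ofIsCompl_eq h (fun x => (f.2 x).symm)
        fun _ => rfl)
      right_inv := fun g => LinearMap.ext fun x => LinearMap.ofIsCompl_apply_right h x })

lemma ncard_relCompl {K V : Type*} [Field K] [AddCommGroup V] [Module K V] [FiniteDimensional K V]
    {T S A : Submodule K V} (hdisj : Disjoint T S) (hsup : T ⊔ S = A) :
    {S' | Disjoint T S' ∧ T ⊔ S' = A}.ncard = Nat.card K ^ (finrank K T * finrank K S) := by
  have hTA : T ≤ A := hsup ▸ le_sup_left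
  have hSA : S ≤ A := hsup ▸ le_sup_right
  have map_comap {U : Submodule K V} (hUA : U ≤ A) : (U.comap A.subtype).map A.subtype = U := by
    rw [Submodule.map_comap_subtype, inf_eq_right.2 hUA]
  have finrank_comap {U : Submodule K V} (hUA : U ≤ A) :
      finrank K (U.comap A.subtype) = finrank K U := by
    rw [← Submodule.finrank_map_subtype_eq, map_comap hUA]
  have isCompl_iff (S' : Submodule K A) : IsCompl (T.comap A.subtype) S' ↔
      Disjoint T (S'.map A.subtype) ∧ T ⊔ S'.map A.subtype = A := by
    rw [A.mapIic.isCompl_iff, Set.Iic.isCompl_iff, Submodule.coe_mapIic_apply,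
      Submodule.coe_mapIic_apply, map_comap hTA]
  have image_eq : {S' | Disjoint T S' ∧ T ⊔ S' = A} =
      Submodule.map A.subtype '' {S' | IsCompl (T.comap A.subtype) S'} := by
    ext S'
    constructor
    · rintro ⟨hdisj', hsup'⟩
      have hmap := map_comap (hsup' ▸ le_sup_right : S' ≤ A)
      exact ⟨S'.comap A.subtype, (isCompl_iff _).2 (by rw [hmap]; exact ⟨hdisj', hsup'⟩), hmap⟩
    · rintro ⟨S'', hS'', rfl⟩
      exact (isCompl_iff S'').1 hS''
  have hcompl : IsCompl (T.comap A.subtype) (S.comap A.subtype) :=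
    (isCompl_iff _).2 (by rw [map_comap hSA]; exact ⟨hdisj, hsup⟩)
  rw [image_eq, Set.ncard_image_of_injective _
    (Submodule.map_injective_of_injective A.injective_subtype), ← Nat.card_coe_set_eq,
    Set.coe_ofPred, natCard_isCompl hcompl, natCard_eq_pow_finrank (K := K),
    finrank_linearMap, finrank_comap hTA, finrank_comap hSA, mul_comm]

lemma finrank_sup_eq_add_of_disjoint {K V : Type*} [Field K] [AddCommGroup V] [Module K V]
    [FiniteDimensional K V] {T S : Submodule K V} (h : Disjoint T S) :
    finrank K ↥(T ⊔ S) = finrank K T + finrank K S := by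
  rw [← Submodule.finrank_sup_add_finrank_inf_eq, h.eq_bot, finrank_bot, add_zero]

variable {K V : Type*} [Field K] [AddCommGroup V] [Module K V] [Finite V]

-- A `t`-space and an `s`-space of `A` have equally many complements in `A`, namely `q ^ (t * s)`,
-- so the complementarity graph between the two families is regular.
lemma card_le_card_of_forall_relCompl_mem [Finite K] {A : Submodule K V} {s t : ℕ}
    (hA : finrank K A = t + s) {M N : Finset (Submodule K V)} (hM : M ⊆ kSubspaces A t)
    (hN : N ⊆ kSubspaces A s)
    (hMN : ∀ T ∈ M, ∀ S, Disjoint T S → T ⊔ S = A → S ∈ N) : #M ≤ #N := by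
  classical
  have finrank_relCompl {T S : Submodule K V} (hdisj : Disjoint T S) (hsup : T ⊔ S = A) :
      finrank K T + finrank K S = t + s := by
    rw [← finrank_sup_eq_add_of_disjoint hdisj, hsup, hA]
  refine Nat.le_of_mul_le_mul_right (card_mul_le_card_mul (m := Nat.card K ^ (t * s))
    (n := Nat.card K ^ (t * s)) (fun T S => Disjoint T S ∧ T ⊔ S = A) ?_ ?_)
    (pow_pos Nat.card_pos _)
  · intro T hT
    obtain ⟨hTA, hTt⟩ := mem_kSubspaces.1 (hM hT)
    obtain ⟨S, hdisj, hsup⟩ := IsModularLattice.exists_disjoint_and_sup_eq hTA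
    have hSs : finrank K S = s := by
      have := finrank_relCompl hdisj hsup
      omega
    rw [← hTt, ← hSs, ← ncard_relCompl hdisj hsup, ← Set.ncard_coe_finset]
    refine Set.ncard_le_ncard fun S' hS' => ?_
    exact mem_coe.2 ((mem_bipartiteAbove _).2 ⟨hMN T hT S' hS'.1 hS'.2, hS'⟩)
  · intro S hS
    obtain ⟨hSA, hSs⟩ := mem_kSubspaces.1 (hN hS)
    obtain ⟨T, hdisj, hsup⟩ := IsModularLattice.exists_disjoint_and_sup_eq hSA
    have hTt : finrank K T = t := by
      have := finrank_relCompl hdisj hsup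
      omega
    rw [← hTt, ← hSs, mul_comm, ← ncard_relCompl hdisj hsup, ← Set.ncard_coe_finset]
    refine Set.ncard_le_ncard fun T' hT' => ?_
    obtain ⟨-, hdisj', hsup'⟩ := (mem_bipartiteBelow _).1 (mem_coe.1 hT')
    exact ⟨hdisj'.symm, sup_comm S T' ▸ hsup'⟩

end RelativeComplements

section Extensions

lemma sub_mem_of_sup_span_singleton_add_eq {K V : Type*} [Field K] [AddCommGroup V] [Module K V]
    {S A : Submodule K V} {v c c' : V} (hSA : S ≤ A) (hv : v ∉ A) (hc : c ∈ A) (hc' : c' ∈ A)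
    (h : S ⊔ Submodule.span K {v + c} = S ⊔ Submodule.span K {v + c'}) : c - c' ∈ S := by
  have hmem : v + c ∈ S ⊔ Submodule.span K {v + c'} :=
    h ▸ Submodule.mem_sup_right (Submodule.mem_span_singleton_self _)
  obtain ⟨u, hu, w, hw, hsum⟩ := Submodule.mem_sup.1 hmem
  obtain ⟨l, rfl⟩ := Submodule.mem_span_singleton.1 hw
  have hlv : (1 - l) • v ∈ A := by
    have : (1 - l) • v = u + l • c' - c := by linear_combination (norm := module) -hsum
    rw [this]
    exact A.sub_mem (A.add_mem (hSA hu) (A.smul_mem l hc')) hc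
  have hl : l = 1 := by
    by_contra hne
    exact hv ((A.smul_mem_iff (sub_ne_zero.2 (Ne.symm hne))).1 hlv)
  have hcc' : c - c' = u := by
    rw [hl, one_smul] at hsum
    linear_combination (norm := module) -hsum
  exact hcc' ▸ hu

variable {K V : Type*} [Field K] [AddCommGroup V] [Module K V] [Finite V]

lemma pow_le_ncard_extensions {S A : Submodule K V} {r : ℕ}
    (hSA : S ≤ A) (hA : finrank K A = finrank K S + r) (hAtop : A ≠ ⊤) :
    Nat.card K ^ r ≤ {T | S ≤ T ∧ finrank K T = finrank K S + 1 ∧ ¬ T ≤ A}.ncard := by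
  obtain ⟨v, -, hv⟩ := SetLike.exists_of_lt (lt_top_iff_ne_top.2 hAtop)
  obtain ⟨C, hdisj, hsup⟩ := IsModularLattice.exists_disjoint_and_sup_eq hSA
  have hCA : C ≤ A := hsup ▸ le_sup_right
  have hCr : finrank K C = r := by
    have := finrank_sup_eq_add_of_disjoint hdisj
    rw [hsup, hA] at this
    omega
  have add_notMem {c : V} (hc : c ∈ C) : v + c ∉ A := fun h =>
    hv ((A.add_mem_iff_left (hCA hc)).1 h)
  rw [← hCr, ← natCard_eq_pow_finrank (K := K) (V := C), ← SetLike.coe_sort_coe,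
    Nat.card_coe_set_eq]
  refine Set.ncard_le_ncard_of_injOn (fun c => S ⊔ Submodule.span K {v + c}) ?_ ?_
  · intro c hc
    have hmem : v + c ∈ S ⊔ Submodule.span K {v + c} :=
      Submodule.mem_sup_right (Submodule.mem_span_singleton_self _)
    exact ⟨le_sup_left, Submodule.finrank_sup_span_singleton fun h => add_notMem hc (hSA h),
      fun h => add_notMem hc (h hmem)⟩
  · intro c hc c' hc' h
    have hS := sub_mem_of_sup_span_singleton_add_eq hSA hv (hCA hc) (hCA hc') h
    exact sub_eq_zero.1 (Submodule.disjoint_def.1 hdisj _ hS (C.sub_mem hc hc'))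

end Extensions

section OwnSubspaces

/-- `T` is an own subspace of the member `A` of the family `F`: it lies in `A` and in no other
member of `F`. -/
def IsOwn {K V : Type*} [Field K] [AddCommGroup V] [Module K V] (F : Set (Submodule K V))
    (A T : Submodule K V) : Prop :=
  T ≤ A ∧ ∀ B ∈ F, T ≤ B → B = A

lemma IsCoverFree.isOwn_or_isOwn {K V : Type*} [Field K] [AddCommGroup V] [Module K V]
    {F : Set (Submodule K V)} (hcf : IsCoverFree F) (hanti : IsAntichain (· ≤ ·) F)
    {A T S : Submodule K V} (hA : A ∈ F) (hTS : T ⊔ S = A) : IsOwn F A T ∨ IsOwn F A S := by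
  have hTA : T ≤ A := hTS ▸ le_sup_left
  have hSA : S ≤ A := hTS ▸ le_sup_right
  by_contra! hnot
  obtain ⟨B, hB, hTB, hBA⟩ : ∃ B ∈ F, T ≤ B ∧ B ≠ A := by
    simpa [IsOwn, hTA] using hnot.1
  obtain ⟨C, hC, hSC, hCA⟩ : ∃ C ∈ F, S ≤ C ∧ C ≠ A := by
    simpa [IsOwn, hSA] using hnot.2
  have hBC : B ≠ C := by
    rintro rfl
    exact hBA (hanti.eq hA hB (hTS ▸ sup_le hTB hSC)).symm
  refine hcf ⟨A, B, C, hA, hB, hC, hBA.symm, hCA.symm, hBC, ?_⟩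
  calc A = T ⊔ S := hTS.symm
    _ ≤ (A ⊓ B) ⊔ (A ⊓ C) := sup_le_sup (le_inf hTA hTB) (le_inf hSA hSC)

variable {K V : Type*} [Field K] [AddCommGroup V] [Module K V] [Finite V]

lemma isAntichain_of_finrank_eq {F : Set (Submodule K V)} {k : ℕ}
    (hdim : ∀ A ∈ F, finrank K A = k) : IsAntichain (· ≤ ·) F :=
  fun A hA B hB hne hle => hne (Submodule.eq_of_le_of_finrank_eq hle (by rw [hdim A hA, hdim B hB]))

open Classical in
/-- The `k`-dimensional own subspaces of the member `A` of `F`. -/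
noncomputable def ownSubspaces (F : Finset (Submodule K V)) (A : Submodule K V) (k : ℕ) :
    Finset (Submodule K V) :=
  {T ∈ kSubspaces A k | IsOwn F A T}

open Classical in
/-- The `k`-dimensional subspaces contained in no member of `F`. -/
noncomputable def uncoveredSubspaces (F : Finset (Submodule K V)) (k : ℕ) :
    Finset (Submodule K V) :=
  {T ∈ kSubspaces ⊤ k | ∀ A ∈ F, ¬ T ≤ A}

lemma mem_ownSubspaces {F : Finset (Submodule K V)} {A T : Submodule K V} {k : ℕ} :
    T ∈ ownSubspaces F A k ↔ finrank K T = k ∧ IsOwn F A T := by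
  simp only [ownSubspaces, mem_filter, mem_kSubspaces]
  exact ⟨fun h => ⟨h.1.2, h.2⟩, fun h => ⟨⟨h.2.1, h.1⟩, h.2⟩⟩

lemma mem_uncoveredSubspaces {F : Finset (Submodule K V)} {T : Submodule K V} {k : ℕ} :
    T ∈ uncoveredSubspaces F k ↔ finrank K T = k ∧ ∀ A ∈ F, ¬ T ≤ A := by
  simp [uncoveredSubspaces]

lemma ownSubspaces_subset (F : Finset (Submodule K V)) (A : Submodule K V) (k : ℕ) :
    ownSubspaces F A k ⊆ kSubspaces A k := by
  classical exact filter_subset _ _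

lemma pairwiseDisjoint_ownSubspaces (F : Finset (Submodule K V)) (k : ℕ) :
    (F : Set (Submodule K V)).PairwiseDisjoint (ownSubspaces F · k) := by
  intro A hA B _ hne
  refine disjoint_left.2 fun T hTA hTB => hne ?_
  exact (mem_ownSubspaces.1 hTB).2.2 A hA (mem_ownSubspaces.1 hTA).2.1

lemma card_kSubspaces_le_card_ownSubspaces_add [Finite K] {F : Finset (Submodule K V)}
    (hcf : IsCoverFree (F : Set (Submodule K V)))
    (hanti : IsAntichain (· ≤ ·) (F : Set (Submodule K V))) {A : Submodule K V} (hA : A ∈ F)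
    {s t : ℕ} (hdim : finrank K A = t + s) :
    #(kSubspaces A t) ≤ #(ownSubspaces F A t) + #(ownSubspaces F A s) := by
  classical
  have hcompl : #(kSubspaces A t \ ownSubspaces F A t) ≤ #(ownSubspaces F A s) := by
    refine card_le_card_of_forall_relCompl_mem hdim sdiff_subset (ownSubspaces_subset F A s)
      fun T hT S hdisj hsup => ?_
    obtain ⟨hT, hTown⟩ := mem_sdiff.1 hT
    have hTt : finrank K T = t := (mem_kSubspaces.1 hT).2
    have hSs : finrank K S = s := by
      have := finrank_sup_eq_add_of_disjoint hdisj
      rw [hsup, hdim, hTt] at this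
      omega
    refine mem_ownSubspaces.2 ⟨hSs, (hcf.isOwn_or_isOwn hanti hA hsup).resolve_left ?_⟩
    exact fun hown => hTown (mem_ownSubspaces.2 ⟨hTt, hown⟩)
  rw [← card_sdiff_add_card_eq_card (ownSubspaces_subset F A t)]
  omega

lemma sum_card_ownSubspaces_add_card_uncoveredSubspaces_le (F : Finset (Submodule K V)) (k : ℕ) :
    ∑ A ∈ F, #(ownSubspaces F A k) + #(uncoveredSubspaces F k) ≤
      #(kSubspaces (⊤ : Submodule K V) k) := by
  classical
  rw [← card_biUnion (pairwiseDisjoint_ownSubspaces F k), ← card_union_of_disjoint]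
  · refine card_le_card (union_subset (biUnion_subset.2 fun A _ T hT => ?_) (filter_subset _ _))
    exact mem_kSubspaces.2 ⟨le_top, (mem_ownSubspaces.1 hT).1⟩
  · refine disjoint_left.2 fun T hT hTunc => ?_
    obtain ⟨A, hA, hTA⟩ := mem_biUnion.1 hT
    exact (mem_uncoveredSubspaces.1 hTunc).2 A hA (mem_ownSubspaces.1 hTA).2.1

-- An extension `T` of an own subspace `S` of `A` with `T ≰ A` is uncovered, because a member
-- containing `T` would contain `S` and hence be `A`.
lemma sum_card_ownSubspaces_mul_pow_le [Finite K] {F : Finset (Submodule K V)} {s r : ℕ}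
    (hdim : ∀ A ∈ F, finrank K A = s + r) (htop : ⊤ ∉ F) :
    (∑ A ∈ F, #(ownSubspaces F A s)) * Nat.card K ^ r ≤
      #(uncoveredSubspaces F (s + 1)) * (Nat.card K ^ (s + 1) - 1) := by
  classical
  rw [← card_biUnion (pairwiseDisjoint_ownSubspaces F s)]
  refine card_mul_le_card_mul (fun S T : Submodule K V => S ≤ T) ?_ ?_
  · intro S hS
    obtain ⟨A, hA, hSA⟩ := mem_biUnion.1 hS
    obtain ⟨rfl, hown⟩ := mem_ownSubspaces.1 hSA
    refine (pow_le_ncard_extensions hown.1 (hdim A hA) (ne_of_mem_of_not_mem hA htop)).trans ?_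
    rw [← Set.ncard_coe_finset]
    refine Set.ncard_le_ncard fun T ⟨hST, hTs, hTA⟩ => mem_coe.2 ?_
    refine (mem_bipartiteAbove _).2 ⟨mem_uncoveredSubspaces.2 ⟨hTs, fun B hB hTB => hTA ?_⟩, hST⟩
    exact hown.2 B hB (hST.trans hTB) ▸ hTB
  · intro T hT
    have hTs := (mem_uncoveredSubspaces.1 hT).1
    refine (card_le_card fun S hS => ?_).trans
      (Nat.le_sub_one_of_lt (card_kSubspaces_lt_of_finrank_eq_succ hTs))
    obtain ⟨hS, hST⟩ := (mem_bipartiteBelow _).1 hS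
    obtain ⟨A, -, hSA⟩ := mem_biUnion.1 hS
    exact mem_kSubspaces.2 ⟨hST, (mem_ownSubspaces.1 hSA).1⟩

end OwnSubspaces

section SteinerSystems

/-- `F` is a `q`-Steiner system `S_q(t, k, n)` on `V`, where `q = |K|` and `n = dim V`. -/
def IsSteinerSystem {K V : Type*} [Field K] [AddCommGroup V] [Module K V] (t k : ℕ)
    (F : Set (Submodule K V)) : Prop :=
  (∀ A ∈ F, finrank K A = k) ∧
    ∀ T : Submodule K V, finrank K T = t → ∃! A, A ∈ F ∧ T ≤ A

variable {K V : Type*} [Field K] [AddCommGroup V] [Module K V] [Finite V]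

lemma IsSteinerSystem.sum_card_kSubspaces {F : Finset (Submodule K V)} {t k : ℕ}
    (hF : IsSteinerSystem t k (F : Set (Submodule K V))) :
    ∑ A ∈ F, #(kSubspaces A t) = #(kSubspaces (⊤ : Submodule K V) t) := by
  classical
  rw [← card_biUnion]
  · congr 1
    ext T
    simp only [mem_biUnion, mem_kSubspaces, le_top, true_and]
    constructor
    · rintro ⟨A, -, -, hT⟩
      exact hT
    · intro hT
      obtain ⟨A, ⟨hA, hTA⟩, -⟩ := hF.2 T hT
      exact ⟨A, hA, hTA, hT⟩
  · intro A hA B hB hne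
    refine disjoint_left.2 fun T hTA hTB => hne ?_
    obtain ⟨hTA, hT⟩ := mem_kSubspaces.1 hTA
    exact (hF.2 T hT).unique ⟨hA, hTA⟩ ⟨hB, (mem_kSubspaces.1 hTB).1⟩

lemma existsUnique_le_of_ownSubspaces_eq {F : Finset (Submodule K V)} {t : ℕ}
    (hown : ∀ A ∈ F, ownSubspaces F A t = kSubspaces A t) (hunc : uncoveredSubspaces F t = ∅)
    {T : Submodule K V} (hT : finrank K T = t) : ∃! A, A ∈ F ∧ T ≤ A := by
  have hcov : ∃ A ∈ F, T ≤ A := by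
    by_contra! hnot
    exact eq_empty_iff_forall_notMem.1 hunc T (mem_uncoveredSubspaces.2 ⟨hT, hnot⟩)
  obtain ⟨A, hA, hTA⟩ := hcov
  have hTown : T ∈ ownSubspaces F A t := hown A hA ▸ mem_kSubspaces.2 ⟨hTA, hT⟩
  exact ⟨A, ⟨hA, hTA⟩, fun B hB => (mem_ownSubspaces.1 hTown).2.2 B hB.1 hB.2⟩

lemma IsCoverFree.isSteinerSystem_of_sum_card_kSubspaces_eq [Finite K]
    {F : Finset (Submodule K V)} {s : ℕ} (hcf : IsCoverFree (F : Set (Submodule K V)))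
    (hdim : ∀ A ∈ F, finrank K A = 2 * s + 1) (htop : ⊤ ∉ F)
    (hsum : ∑ A ∈ F, #(kSubspaces A (s + 1)) = #(kSubspaces (⊤ : Submodule K V) (s + 1))) :
    IsSteinerSystem (s + 1) (2 * s + 1) (F : Set (Submodule K V)) := by
  have hle : ∑ A ∈ F, #(kSubspaces A (s + 1)) ≤
      ∑ A ∈ F, #(ownSubspaces F A (s + 1)) + ∑ A ∈ F, #(ownSubspaces F A s) := by
    rw [← sum_add_distrib]
    exact sum_le_sum fun A hA => card_kSubspaces_le_card_ownSubspaces_add hcf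
      (isAntichain_of_finrank_eq hdim) hA (by rw [hdim A hA]; omega)
  have hpart := sum_card_ownSubspaces_add_card_uncoveredSubspaces_le F (s + 1)
  have hextend := sum_card_ownSubspaces_mul_pow_le (s := s) (r := s + 1)
    (fun A hA => by rw [hdim A hA]; omega) htop
  have hunc_le : #(uncoveredSubspaces F (s + 1)) ≤ ∑ A ∈ F, #(ownSubspaces F A s) := by omega
  have hown_zero : ∑ A ∈ F, #(ownSubspaces F A s) = 0 := by
    have hpos : 0 < Nat.card K ^ (s + 1) := pow_pos Nat.card_pos _
    by_contra hne
    refine (hextend.trans (Nat.mul_le_mul_right _ hunc_le)).not_gt ?_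
    exact Nat.mul_lt_mul_of_pos_left (Nat.sub_one_lt hpos.ne') (Nat.pos_of_ne_zero hne)
  have hown_le : ∀ A ∈ F, #(ownSubspaces F A (s + 1)) ≤ #(kSubspaces A (s + 1)) :=
    fun A _ => card_le_card (ownSubspaces_subset F A (s + 1))
  have hown_card : ∀ A ∈ F, #(ownSubspaces F A (s + 1)) = #(kSubspaces A (s + 1)) :=
    (sum_eq_sum_iff_of_le hown_le).1 (le_antisymm (sum_le_sum hown_le) (by omega))
  refine ⟨hdim, fun T hT => existsUnique_le_of_ownSubspaces_eq (fun A hA => ?_) ?_ hT⟩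
  · exact eq_of_subset_of_card_le (ownSubspaces_subset F A (s + 1)) (hown_card A hA).ge
  · exact card_eq_zero.1 (by omega)

lemma sum_card_kSubspaces_eq_mul_gaussQ [Finite K] {F : Finset (Submodule K V)} {t k : ℕ}
    (hdim : ∀ A ∈ F, finrank K A = k) (htk : t ≤ k) :
    ((∑ A ∈ F, #(kSubspaces A t) : ℕ) : ℚ) = #F * GaussQ (Nat.card K) k t := by
  rw [Nat.cast_sum, ← nsmul_eq_mul]
  refine sum_eq_card_nsmul fun A hA => ?_
  rw [card_kSubspaces (by rwa [hdim A hA]), hdim A hA]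

end SteinerSystems

theorem stmt3 (q n t : ℕ) (K : Type*) [Field K] [Fintype K] (hK : Fintype.card K = q)
    (V : Type*) [AddCommGroup V] [Module K V] [FiniteDimensional K V]
    (hV : Module.finrank K V = n) (ht : 1 ≤ t) (hn : 2 * t ≤ n)
    (F : Set (Submodule K V)) (hdim : ∀ A ∈ F, Module.finrank K A = 2 * t - 1)
    (hcf : IsCoverFree F) :
    (F.ncard : ℚ) = GaussQ q n t / GaussQ q (2 * t - 1) t ↔
      (∀ A ∈ F, Module.finrank K A = 2 * t - 1) ∧
      ∀ T : Submodule K V, Module.finrank K T = t → ∃! A, A ∈ F ∧ T ≤ A := by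
  obtain ⟨s, rfl⟩ := Nat.exists_eq_add_of_le' ht
  obtain rfl : Nat.card K = q := by rw [Nat.card_eq_fintype_card, hK]
  rw [show 2 * (s + 1) - 1 = 2 * s + 1 by omega] at hdim ⊢
  have : Finite V := Module.finite_of_finite K
  lift F to Finset (Submodule K V) using F.toFinite
  have htop : ⊤ ∉ F := fun h => by
    have := hdim ⊤ h
    rw [finrank_top] at this
    omega
  have hgauss : GaussQ (Nat.card K) n (s + 1) = #(kSubspaces (⊤ : Submodule K V) (s + 1)) := by
    rw [card_kSubspaces (by rw [finrank_top]; omega), finrank_top, hV]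
  rw [Set.ncard_coe_finset, eq_div_iff (gaussQ_pos Finite.one_lt_card (by omega)).ne', hgauss,
    ← sum_card_kSubspaces_eq_mul_gaussQ hdim (by omega), Nat.cast_inj]
  exact ⟨hcf.isSteinerSystem_of_sum_card_kSubspaces_eq hdim htop,
    IsSteinerSystem.sum_card_kSubspaces⟩
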